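/- Let L ≥ 1 and let f_{i,j,k} : ℝ → ℂ (for 0 ≤ i, j, k ≤ L−1) be continuous 1-periodic functions, each with an absolutely convergent Fourier series. Consider integration variables x^a_{i,j,k}, x^b_{i,j,k}, x^c_{i,j,k} with all indices modulo L. Then ∫_{[0,1]^{3L³}} ∏_{i,j,k=0}^{L−1} [ f_{i,j,k}(x^a_{i,j,k} − x^a_{i,j+1,k} − x^b_{i,j,k} + x^b_{i+1,j,k}) · f_{i,j,k}(x^c_{i,j,k} − x^c_{i+1,j,k} − x^a_{i,j,k} + x^a_{i,j,k+1}) · f_{i,j,k}(x^b_{i,j,k} − x^b_{i,j,k+1} − x^c_{i,j,k} + x^c_{i,j+1,k}) ] dx = ∑_{(h^a,h^b,h^c)∈𝓗} ∏_{i,j,k=0}^{L−1} f̂_{i,j,k}(h^a_{i,j,k}) f̂_{i,j,k}(h^b_{i,j,k}) f̂_{i,j,k}(h^c_{i,j,k}), where 𝓗 ⊂ ℤ^{3L³} is the set of all triples of integer arrays (h^a, h^b, h^c) indexed by (i,j,k) modulo L satisfying, for all i, j, k: h^c_{i,j,k} − h^c_{i,j−1,k} − h^b_{i,j,k} + h^b_{i,j,k−1}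 = 0, h^a_{i,j,k} − h^a_{i,j,k−1} − h^c_{i,j,k} + h^c_{i−1,j,k} = 0, and h^b_{i,j,k} − h^b_{i−1,j,k} − h^a_{i,j,k} + h^a_{i,j−1,k} = 0. Here, at each site (i,j,k), h^c_{i,j,k} is paired with the first factor, h^b_{i,j,k} with the second, and h^a_{i,j,k} with the third. -/

import Mathlib

open MeasureTheory

/-- The `ℓ`-th Fourier coefficient of a 1-periodic function `f : ℝ → ℂ`,
`f̂(ℓ) = ∫₀¹ f(x) e^{−2πiℓx} dx`. -/
noncomputable def fourierCoeffR (f : ℝ → ℂ) (ℓ : ℤ) : ℂ :=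
  ∫ x in (0:ℝ)..1, f x * Complex.exp (-(2 * Real.pi * Complex.I * ℓ * x))

/-- The product of finitely many absolutely convergent sums is the absolutely convergent sum, over
all choice functions, of the products of the chosen terms. -/
theorem summable_norm_prod_and_prod_tsum {κ : Type*} (n : ℕ) (f : Fin n → κ → ℂ)
    (hf : ∀ i, Summable fun a => ‖f i a‖) :
    (Summable fun h : Fin n → κ => ‖∏ i, f i (h i)‖) ∧
      ∏ i, ∑' a, f i a = ∑' h : Fin n → κ, ∏ i, f i (h i) := by
  induction n with
  | zero => exact ⟨Summable.of_finite, by simp⟩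
  | succ n ih =>
    obtain ⟨hs, ht⟩ := ih (fun i => f i.succ) fun i => hf i.succ
    have key : ∀ p : κ × (Fin n → κ), ∏ i, f i (Fin.consEquiv (fun _ => κ) p i) =
        f 0 p.1 * ∏ i : Fin n, f i.succ (p.2 i) := fun p => by
      simp [Fin.prod_univ_succ, Fin.consEquiv]
    constructor
    · rw [← (Fin.consEquiv fun _ => κ).summable_iff]
      refine ((hf 0).mul_norm hs).congr fun p => ?_
      simp only [Function.comp_apply, key]
    · rw [Fin.prod_univ_succ, ht, tsum_mul_tsum_of_summable_norm (hf 0) hs,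
        ← (Fin.consEquiv fun _ => κ).tsum_eq]
      exact tsum_congr fun p => (key p).symm

theorem summable_norm_prod_and_prod_tsum_array {κ : Type*} (n : ℕ)
    (f : Fin n → Fin n → Fin n → κ → ℂ) (hf : ∀ i j k, Summable fun a => ‖f i j k a‖) :
    (Summable fun h : Fin n → Fin n → Fin n → κ => ‖∏ i, ∏ j, ∏ k, f i j k (h i j k)‖) ∧
      ∏ i, ∏ j, ∏ k, ∑' a, f i j k a =
        ∑' h : Fin n → Fin n → Fin n → κ, ∏ i, ∏ j, ∏ k, f i j k (h i j k) := by
  have h₁ := fun i j => summable_norm_prod_and_prod_tsum n (f i j) (hf i j)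
  have h₂ := fun i => summable_norm_prod_and_prod_tsum n
    (fun j (h : Fin n → κ) => ∏ k, f i j k (h k)) fun j => (h₁ i j).1
  have h₃ := summable_norm_prod_and_prod_tsum n
    (fun i (h : Fin n → Fin n → κ) => ∏ j, ∏ k, f i j k (h j k)) fun i => (h₂ i).1
  refine ⟨h₃.1, ?_⟩
  rw [← h₃.2]
  refine Finset.prod_congr rfl fun i _ => ?_
  rw [← (h₂ i).2]
  exact Finset.prod_congr rfl fun j _ => (h₁ i j).2

theorem setIntegral_Icc_prod {ι E : Type*} [Fintype ι] [MeasureSpace E] [Preorder E] [Zero E]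
    [One E] [SigmaFinite (volume : Measure E)] (F : ι → E → ℂ) :
    ∫ x in Set.Icc (0 : ι → E) 1, ∏ i, F i (x i) = ∏ i, ∫ y in Set.Icc (0 : E) 1, F i y := by
  rw [← Set.pi_univ_Icc, volume_pi, Measure.restrict_pi_pi]
  exact integral_fintype_prod_eq_prod F

/-- Orthogonality of the characters of the unit circle. -/
theorem setIntegral_exp_two_pi_mul (m : ℤ) :
    ∫ x in Set.Icc (0 : ℝ) 1, Complex.exp (2 * Real.pi * Complex.I * m * x) =
      if m = 0 then 1 else 0 := by
  rw [integral_Icc_eq_integral_Ioc, ← intervalIntegral.integral_of_le zero_le_one]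
  split_ifs with hm
  · simp [hm]
  · have hc : 2 * Real.pi * Complex.I * m ≠ 0 :=
      mul_ne_zero Complex.two_pi_I_ne_zero (Int.cast_ne_zero.mpr hm)
    rw [integral_exp_mul_complex hc]
    have : Complex.exp (2 * Real.pi * Complex.I * m) = 1 := by
      rw [mul_comm]; exact Complex.exp_int_mul_two_pi_mul_I m
    simp [this]

theorem setIntegral_exp_array (n : ℕ) (A : Fin n → Fin n → Fin n → ℤ) :
    ∫ x in Set.Icc (0 : Fin n → Fin n → Fin n → ℝ) 1,
      Complex.exp (2 * Real.pi * Complex.I * ∑ i, ∑ j, ∑ k, (A i j k : ℂ) * x i j k) =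
      if ∀ i j k, A i j k = 0 then 1 else 0 := by
  simp only [Finset.mul_sum, Complex.exp_sum, ← mul_assoc]
  rw [setIntegral_Icc_prod fun i (x : Fin n → Fin n → ℝ) =>
    ∏ j, ∏ k, Complex.exp (2 * Real.pi * Complex.I * A i j k * x j k)]
  simp only [fun i => setIntegral_Icc_prod fun j (x : Fin n → ℝ) =>
    ∏ k, Complex.exp (2 * Real.pi * Complex.I * A i j k * x k)]
  simp only [fun i j => setIntegral_Icc_prod fun k (x : ℝ) =>
    Complex.exp (2 * Real.pi * Complex.I * A i j k * x)]
  simp only [setIntegral_exp_two_pi_mul, Fintype.prod_ite_zero, Finset.prod_const_one]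

theorem setIntegral_Icc_triple_mul {X Y Z : Type*} [MeasureSpace X] [MeasureSpace Y]
    [MeasureSpace Z] [Preorder X] [Preorder Y] [Preorder Z] [Zero X] [Zero Y] [Zero Z] [One X]
    [One Y] [One Z] [SFinite (volume : Measure X)] [SFinite (volume : Measure Y)]
    [SFinite (volume : Measure Z)] (f : X → ℂ) (g : Y → ℂ) (h : Z → ℂ) :
    ∫ x in Set.Icc (0 : X × Y × Z) 1, f x.1 * (g x.2.1 * h x.2.2) =
      (∫ x in Set.Icc (0 : X) 1, f x) *
        ((∫ y in Set.Icc (0 : Y) 1, g y) * ∫ z in Set.Icc (0 : Z) 1, h z) := by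
  have hbox : Set.Icc (0 : X × Y × Z) 1 = Set.Icc 0 1 ×ˢ (Set.Icc 0 1 ×ˢ Set.Icc 0 1) := by
    rw [Set.Icc_prod_Icc, Set.Icc_prod_Icc]; rfl
  have : SFinite (volume : Measure (Y × Z)) := by
    rw [Measure.volume_eq_prod]; infer_instance
  rw [hbox, Measure.volume_eq_prod, setIntegral_prod_mul f fun y : Y × Z => g y.1 * h y.2,
    Measure.volume_eq_prod, setIntegral_prod_mul]

theorem Continuous.integrableOn_Icc_triple {X : Type*} [TopologicalSpace X] [MeasureSpace X]
    [BorelSpace X] [SecondCountableTopology X] [Preorder X] [CompactIccSpace X]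
    [SigmaFinite (volume : Measure X)] [IsLocallyFiniteMeasure (volume : Measure X)]
    [T2Space X] {F : X × X × X → ℂ} (hF : Continuous F) (a b : X × X × X) :
    IntegrableOn F (Set.Icc a b) := by
  have : SigmaFinite (volume : Measure (X × X)) := by
    rw [Measure.volume_eq_prod]; infer_instance
  have : IsLocallyFiniteMeasure (volume : Measure (X × X)) := by
    rw [Measure.volume_eq_prod]; infer_instance
  have : IsLocallyFiniteMeasure (volume : Measure (X × X × X)) := by
    rw [Measure.volume_eq_prod]; infer_instance
  exact hF.integrableOn_Icc

/-- Triples of three-dimensional arrays of side `n` with entries in `R`. -/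
abbrev TripleArray (n : ℕ) (R : Type) : Type :=
  (Fin n → Fin n → Fin n → R) × (Fin n → Fin n → Fin n → R) × (Fin n → Fin n → Fin n → R)

theorem setIntegral_exp_triple (n : ℕ) (A B C : Fin n → Fin n → Fin n → ℤ) :
    ∫ x in Set.Icc (0 : TripleArray n ℝ) 1,
      Complex.exp (2 * Real.pi * Complex.I * ((∑ i, ∑ j, ∑ k, (A i j k : ℂ) * x.1 i j k) +
        ((∑ i, ∑ j, ∑ k, (B i j k : ℂ) * x.2.1 i j k) +
          ∑ i, ∑ j, ∑ k, (C i j k : ℂ) * x.2.2 i j k))) =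
      if ∀ i j k, A i j k = 0 ∧ B i j k = 0 ∧ C i j k = 0 then 1 else 0 := by
  simp only [mul_add, Complex.exp_add]
  rw [setIntegral_Icc_triple_mul
      (fun x : Fin n → Fin n → Fin n → ℝ =>
        Complex.exp (2 * Real.pi * Complex.I * ∑ i, ∑ j, ∑ k, (A i j k : ℂ) * x i j k))
      (fun x : Fin n → Fin n → Fin n → ℝ =>
        Complex.exp (2 * Real.pi * Complex.I * ∑ i, ∑ j, ∑ k, (B i j k : ℂ) * x i j k))
      (fun x : Fin n → Fin n → Fin n → ℝ =>
        Complex.exp (2 * Real.pi * Complex.I * ∑ i, ∑ j, ∑ k, (C i j k : ℂ) * x i j k)),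
    setIntegral_exp_array, setIntegral_exp_array, setIntegral_exp_array]
  simp only [forall_and, ite_and, mul_ite, mul_one, mul_zero]
  split_ifs <;> simp

/-- Summation by parts on the discrete torus: the pairing of `h` with the lattice curl of `x` equals
the pairing of the adjoint curl of `h` with `x`. -/
theorem sum_mul_curl_eq (L : ℕ) [NeZero L] (ha hb hc xa xb xc : Fin L → Fin L → Fin L → ℂ) :
    (∑ i, ∑ j, ∑ k, ha i j k * (xb i j k - xb i j (k + 1) - xc i j k + xc i (j + 1) k)) +
      ((∑ i, ∑ j, ∑ k, hb i j k * (xc i j k - xc (i + 1) j k - xa i j k + xa i j (k + 1))) +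
        ∑ i, ∑ j, ∑ k, hc i j k * (xa i j k - xa i (j + 1) k - xb i j k + xb (i + 1) j k)) =
    (∑ i, ∑ j, ∑ k, (hc i j k - hc i (j - 1) k - hb i j k + hb i j (k - 1)) * xa i j k) +
      ((∑ i, ∑ j, ∑ k, (ha i j k - ha i j (k - 1) - hc i j k + hc (i - 1) j k) * xb i j k) +
        ∑ i, ∑ j, ∑ k, (hb i j k - hb (i - 1) j k - ha i j k + ha i (j - 1) k) * xc i j k) := by
  have shift : ∀ F : Fin L → ℂ, ∑ i, F (i + 1) = ∑ i, F i := fun F =>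
    Equiv.sum_comp (Equiv.addRight (1 : Fin L)) F
  have shift₁ : ∀ u v : Fin L → Fin L → Fin L → ℂ,
      ∑ i, ∑ j, ∑ k, u i j k * v (i + 1) j k = ∑ i, ∑ j, ∑ k, u (i - 1) j k * v i j k :=
    fun u v => by
      rw [← shift fun i => ∑ j, ∑ k, u (i - 1) j k * v i j k]
      simp only [add_sub_cancel_right]
  have shift₂ : ∀ u v : Fin L → Fin L → Fin L → ℂ,
      ∑ i, ∑ j, ∑ k, u i j k * v i (j + 1) k = ∑ i, ∑ j, ∑ k, u i (j - 1) k * v i j k :=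
    fun u v => Finset.sum_congr rfl fun i _ => by
      rw [← shift fun j => ∑ k, u i (j - 1) k * v i j k]
      simp only [add_sub_cancel_right]
  have shift₃ : ∀ u v : Fin L → Fin L → Fin L → ℂ,
      ∑ i, ∑ j, ∑ k, u i j k * v i j (k + 1) = ∑ i, ∑ j, ∑ k, u i j (k - 1) * v i j k :=
    fun u v => Finset.sum_congr rfl fun i _ => Finset.sum_congr rfl fun j _ => by
      rw [← shift fun k => u i j (k - 1) * v i j k]
      simp only [add_sub_cancel_right]
  simp only [mul_add, mul_sub, add_mul, sub_mul, Finset.sum_add_distrib, Finset.sum_sub_distrib,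
    shift₁, shift₂, shift₃]
  ring

theorem prod_eq_tsum_mul_exp (L : ℕ) (f : Fin L → Fin L → Fin L → ℝ → ℂ)
    (habs : ∀ i j k, Summable fun ℓ : ℤ => ‖fourierCoeffR (f i j k) ℓ‖)
    (hrep : ∀ i j k (x : ℝ),
      f i j k x = ∑' ℓ : ℤ, fourierCoeffR (f i j k) ℓ *
        Complex.exp (2 * Real.pi * Complex.I * ℓ * x))
    (y : Fin L → Fin L → Fin L → ℝ) :
    (Summable fun h : Fin L → Fin L → Fin L → ℤ =>
      ‖(∏ i, ∏ j, ∏ k, fourierCoeffR (f i j k) (h i j k)) *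
        Complex.exp (2 * Real.pi * Complex.I * ∑ i, ∑ j, ∑ k, (h i j k : ℂ) * y i j k)‖) ∧
    ∏ i, ∏ j, ∏ k, f i j k (y i j k) =
      ∑' h : Fin L → Fin L → Fin L → ℤ,
        (∏ i, ∏ j, ∏ k, fourierCoeffR (f i j k) (h i j k)) *
          Complex.exp (2 * Real.pi * Complex.I * ∑ i, ∑ j, ∑ k, (h i j k : ℂ) * y i j k) := by
  have hnorm : ∀ (ℓ : ℤ) (t : ℝ), ‖Complex.exp (2 * Real.pi * Complex.I * ℓ * t)‖ = 1 := by
    intro ℓ t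
    rw [Complex.norm_exp]
    simp
  have h := summable_norm_prod_and_prod_tsum_array L
    (fun i j k (ℓ : ℤ) => fourierCoeffR (f i j k) ℓ *
      Complex.exp (2 * Real.pi * Complex.I * ℓ * y i j k))
    (fun i j k => by simpa only [norm_mul, hnorm, mul_one] using habs i j k)
  simp only [Finset.mul_sum, Complex.exp_sum, ← mul_assoc, ← Finset.prod_mul_distrib]
  refine ⟨h.1, ?_⟩
  rw [← h.2]
  simp only [hrep]

theorem stmt6 (L : ℕ) [NeZero L] (f : Fin L → Fin L → Fin L → ℝ → ℂ)
    (hcont : ∀ i j k, Continuous (f i j k))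
    (hper : ∀ i j k (x : ℝ), f i j k (x + 1) = f i j k x)
    (habs : ∀ i j k, Summable fun ℓ : ℤ => ‖fourierCoeffR (f i j k) ℓ‖)
    (hrep : ∀ i j k (x : ℝ),
      f i j k x = ∑' ℓ : ℤ, fourierCoeffR (f i j k) ℓ *
        Complex.exp (2 * Real.pi * Complex.I * ℓ * x)) :
    (∫ x in Set.Icc
        (0 : (Fin L → Fin L → Fin L → ℝ) × (Fin L → Fin L → Fin L → ℝ) ×
          (Fin L → Fin L → Fin L → ℝ)) 1,
      ∏ i, ∏ j, ∏ k,
        (f i j k (x.1 i j k - x.1 i (j + 1) k - x.2.1 i j k + x.2.1 (i + 1) j k) *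
         f i j k (x.2.2 i j k - x.2.2 (i + 1) j k - x.1 i j k + x.1 i j (k + 1)) *
         f i j k (x.2.1 i j k - x.2.1 i j (k + 1) - x.2.2 i j k + x.2.2 i (j + 1) k))) =
      ∑' h : {h : (Fin L → Fin L → Fin L → ℤ) × (Fin L → Fin L → Fin L → ℤ) ×
          (Fin L → Fin L → Fin L → ℤ) //
          ∀ i j k,
            h.2.2 i j k - h.2.2 i (j - 1) k - h.2.1 i j k + h.2.1 i j (k - 1) = 0 ∧
            h.1 i j k - h.1 i j (k - 1) - h.2.2 i j k + h.2.2 (i - 1) j k = 0 ∧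
            h.2.1 i j k - h.2.1 (i - 1) j k - h.1 i j k + h.1 i (j - 1) k = 0},
        ∏ i, ∏ j, ∏ k,
          (fourierCoeffR (f i j k) (h.1.1 i j k) *
           fourierCoeffR (f i j k) (h.1.2.1 i j k) *
           fourierCoeffR (f i j k) (h.1.2.2 i j k)) := by
  classical
  let coef : TripleArray L ℤ → ℂ := fun h => ∏ i, ∏ j, ∏ k,
    (fourierCoeffR (f i j k) (h.1 i j k) * fourierCoeffR (f i j k) (h.2.1 i j k) *
      fourierCoeffR (f i j k) (h.2.2 i j k))
  let A : TripleArray L ℤ → Fin L → Fin L → Fin L → ℤ := fun h i j k =>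
    h.2.2 i j k - h.2.2 i (j - 1) k - h.2.1 i j k + h.2.1 i j (k - 1)
  let B : TripleArray L ℤ → Fin L → Fin L → Fin L → ℤ := fun h i j k =>
    h.1 i j k - h.1 i j (k - 1) - h.2.2 i j k + h.2.2 (i - 1) j k
  let C : TripleArray L ℤ → Fin L → Fin L → Fin L → ℤ := fun h i j k =>
    h.2.1 i j k - h.2.1 (i - 1) j k - h.1 i j k + h.1 i (j - 1) k
  let phase : TripleArray L ℤ → TripleArray L ℝ → ℂ := fun h x =>
    (∑ i, ∑ j, ∑ k, (A h i j k : ℂ) * x.1 i j k) +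
    ((∑ i, ∑ j, ∑ k, (B h i j k : ℂ) * x.2.1 i j k) + ∑ i, ∑ j, ∑ k, (C h i j k : ℂ) * x.2.2 i j k)
  let F : TripleArray L ℤ → TripleArray L ℝ → ℂ := fun h x =>
    coef h * Complex.exp (2 * Real.pi * Complex.I * phase h x)
  have hnorm : ∀ h x, ‖F h x‖ = ‖coef h‖ := by
    intro h x
    have : phase h x = (((∑ i, ∑ j, ∑ k, A h i j k * x.1 i j k) +
      ((∑ i, ∑ j, ∑ k, B h i j k * x.2.1 i j k) +
        ∑ i, ∑ j, ∑ k, C h i j k * x.2.2 i j k) : ℝ) : ℂ) := by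
      simp only [phase]; push_cast; rfl
    simp only [F, norm_mul, this]
    rw [Complex.norm_exp, Complex.re_mul_ofReal]
    simp
  have expand : ∀ x : TripleArray L ℝ, (Summable fun h => ‖F h x‖) ∧ ∏ i, ∏ j, ∏ k,
        (f i j k (x.1 i j k - x.1 i (j + 1) k - x.2.1 i j k + x.2.1 (i + 1) j k) *
         f i j k (x.2.2 i j k - x.2.2 (i + 1) j k - x.1 i j k + x.1 i j (k + 1)) *
         f i j k (x.2.1 i j k - x.2.1 i j (k + 1) - x.2.2 i j k + x.2.2 i (j + 1) k)) =
      ∑' h, F h x := by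
    intro x
    have ha := prod_eq_tsum_mul_exp L f habs hrep fun i j k =>
      x.2.1 i j k - x.2.1 i j (k + 1) - x.2.2 i j k + x.2.2 i (j + 1) k
    have hb := prod_eq_tsum_mul_exp L f habs hrep fun i j k =>
      x.2.2 i j k - x.2.2 (i + 1) j k - x.1 i j k + x.1 i j (k + 1)
    have hc := prod_eq_tsum_mul_exp L f habs hrep fun i j k =>
      x.1 i j k - x.1 i (j + 1) k - x.2.1 i j k + x.2.1 (i + 1) j k
    have hF : ∀ h : TripleArray L ℤ, F h x =
        ((∏ i, ∏ j, ∏ k, fourierCoeffR (f i j k) (h.1 i j k)) *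
          Complex.exp (2 * Real.pi * Complex.I * ∑ i, ∑ j, ∑ k, h.1 i j k *
            ((x.2.1 i j k - x.2.1 i j (k + 1) - x.2.2 i j k + x.2.2 i (j + 1) k : ℝ) : ℂ))) *
        (((∏ i, ∏ j, ∏ k, fourierCoeffR (f i j k) (h.2.1 i j k)) *
          Complex.exp (2 * Real.pi * Complex.I * ∑ i, ∑ j, ∑ k, h.2.1 i j k *
            ((x.2.2 i j k - x.2.2 (i + 1) j k - x.1 i j k + x.1 i j (k + 1) : ℝ) : ℂ))) *
        ((∏ i, ∏ j, ∏ k, fourierCoeffR (f i j k) (h.2.2 i j k)) *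
          Complex.exp (2 * Real.pi * Complex.I * ∑ i, ∑ j, ∑ k, h.2.2 i j k *
            ((x.1 i j k - x.1 i (j + 1) k - x.2.1 i j k + x.2.1 (i + 1) j k : ℝ) : ℂ)))) := by
      intro h
      have hp := sum_mul_curl_eq L (fun i j k => (h.1 i j k : ℂ)) (fun i j k => (h.2.1 i j k : ℂ))
        (fun i j k => (h.2.2 i j k : ℂ)) (fun i j k => (x.1 i j k : ℂ))
        (fun i j k => (x.2.1 i j k : ℂ)) (fun i j k => (x.2.2 i j k : ℂ))
      simp only [F, phase, A, B, C, coef, Finset.prod_mul_distrib]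
      push_cast
      rw [← hp, mul_add, mul_add, Complex.exp_add, Complex.exp_add]
      ring
    have hbc := hb.1.mul_norm hc.1
    constructor
    · exact (ha.1.mul_norm hbc).congr fun h => by rw [hF h]
    · simp only [Finset.prod_mul_distrib]
      rw [ha.2, hb.2, hc.2, mul_comm, mul_comm (tsum _) (tsum _),
        tsum_mul_tsum_of_summable_norm hb.1 hc.1, tsum_mul_tsum_of_summable_norm ha.1 hbc]
      exact tsum_congr fun h => (hF h).symm
  have : IsLocallyFiniteMeasure (volume : Measure (Fin L → Fin L → ℝ)) :=
    Measure.pi.isLocallyFiniteMeasure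
  have : IsLocallyFiniteMeasure (volume : Measure (Fin L → Fin L → Fin L → ℝ)) :=
    Measure.pi.isLocallyFiniteMeasure
  have hint : ∀ h, IntegrableOn (F h) (Set.Icc (0 : TripleArray L ℝ) 1) := by
    intro h
    refine Continuous.integrableOn_Icc_triple ?_ 0 1
    simp only [F, phase]
    fun_prop
  have hsum : Summable fun h => ∫ x in Set.Icc (0 : TripleArray L ℝ) 1, ‖F h x‖ := by
    simp only [hnorm, integral_const, smul_eq_mul]
    simpa only [hnorm] using (expand 0).1.mul_left _
  simp only [fun x : TripleArray L ℝ => (expand x).2]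
  rw [← integral_tsum_of_summable_integral_norm hint hsum]
  simp only [F, phase, integral_const_mul, setIntegral_exp_triple]
  refine (tsum_congr fun h => ?_).trans (tsum_subtype
    {h : TripleArray L ℤ | ∀ i j k, A h i j k = 0 ∧ B h i j k = 0 ∧ C h i j k = 0} coef).symm
  simp only [Set.indicator_apply, Set.mem_ofPred_eq, mul_ite, mul_one, mul_zero]
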